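/- For any prime p ≥ 5, the double sum ∑_{n=0}^{p-1} ∑_{m=0}^{p-1} binomial(n+m, m)^2 is congruent to 1 modulo p^2 if p ≡ 1 (mod 3), and congruent to -1 modulo p^2 if p ≡ 2 (mod 3). -/

import Mathlib

/-- The nontrivial Dirichlet character modulo 3, as an integer-valued function on `ℕ`. -/
def chiThree (k : ℕ) : ℤ := if k % 3 = 1 then 1 else if k % 3 = 2 then -1 else 0

lemma chiThree_add_two (k : ℕ) : chiThree (k + 2) = -chiThree k - chiThree (k + 1) := by
  unfold chiThree
  have : k % 3 = 0 ∨ k % 3 = 1 ∨ k % 3 = 2 := by omega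
  rcases this with h | h | h <;> simp [Nat.add_mod, h]

lemma chiThree_two_mul (k : ℕ) : chiThree (2 * k) = -chiThree k := by
  unfold chiThree
  have : k % 3 = 0 ∨ k % 3 = 1 ∨ k % 3 = 2 := by omega
  rcases this with h | h | h <;> simp [Nat.mul_mod, h]

lemma choose_two_mul_succ (n j : ℕ) : (2 * (n + 1)).choose (n + 1 + j + 1) =
    (2 * n).choose (n + j) + 2 * (2 * n).choose (n + j + 1) + (2 * n).choose (n + j + 2) := by
  rw [show 2 * (n + 1) = 2 * n + 1 + 1 by ring, show n + 1 + j + 1 = n + j + 1 + 1 by ring,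
    Nat.choose_succ_succ, Nat.choose_succ_succ, Nat.choose_succ_succ]
  ring

lemma sum_choose_two_mul_succ_mul_chiThree (n N : ℕ) :
    ∑ j ∈ Finset.range N, ((2 * (n + 1)).choose (n + 1 + j + 1) : ℤ) * chiThree (j + 1) =
      ∑ j ∈ Finset.range N, ((2 * n).choose (n + j + 1) : ℤ) * chiThree (j + 1) +
        (2 * n).choose n + (2 * n).choose (n + N + 1) * chiThree N -
        (2 * n).choose (n + N) * chiThree (N + 1) := by
  induction N with
  | zero => simp [chiThree]
  | succ N ih =>
    rw [Finset.sum_range_succ, Finset.sum_range_succ, ih, choose_two_mul_succ, chiThree_add_two,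
      ← add_assoc n N 1]
    push_cast
    ring

lemma sum_centralBinom_eq (n N : ℕ) (h : n ≤ N) :
    ∑ k ∈ Finset.range n, ((2 * k).choose k : ℤ) =
      ∑ j ∈ Finset.range N, ((2 * n).choose (n + j + 1) : ℤ) * chiThree (j + 1) := by
  induction n with
  | zero => simp
  | succ n ih =>
    rw [Finset.sum_range_succ, ih (by omega), sum_choose_two_mul_succ_mul_chiThree,
      Nat.choose_eq_zero_of_lt (show 2 * n < n + N by omega),
      Nat.choose_eq_zero_of_lt (show 2 * n < n + N + 1 by omega)]
    simp

lemma sum_choose_succ_mul {R : Type*} [CommRing R] (f : ℕ → R) (n N : ℕ) :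
    ∑ k ∈ Finset.range (N + 1), ((n + 1).choose k : R) * f k =
      ∑ k ∈ Finset.range (N + 1), (n.choose k : R) * f k +
        ∑ k ∈ Finset.range N, (n.choose k : R) * f (k + 1) := by
  rw [Finset.sum_range_succ', Finset.sum_range_succ' _ N]
  simp only [Nat.choose_succ_succ', Nat.cast_add, add_mul, Finset.sum_add_distrib,
    Nat.choose_zero_right]
  ring

lemma sum_choose_mul_chiThree (n s : ℕ) :
    ∑ k ∈ Finset.range (n + 1), (n.choose k : ℤ) * chiThree (k + s) =
      (-1) ^ n * chiThree (2 * n + s) := by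
  induction n generalizing s with
  | zero => simp
  | succ n ih =>
    rw [sum_choose_succ_mul (fun k => chiThree (k + s)), Finset.sum_range_succ, ih]
    have h := ih (s + 1)
    simp only [add_right_comm _ 1 s, ← add_assoc] at h ⊢
    rw [h, show 2 * (n + 1) + s = 2 * n + s + 2 by ring, chiThree_add_two]
    simp
    ring

lemma cast_choose_two_mul_prime {p i : ℕ} (hp : p.Prime) (hi : 0 < i) (hip : i < p) :
    ((2 * p).choose (p + i) : ZMod (p ^ 2)) = 2 * p.choose i := by
  rw [two_mul, Nat.add_choose_eq, Nat.cast_sum]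
  have hne : (p, i) ≠ (i, p) := by simp; omega
  have hsub : {(p, i), (i, p)} ⊆ Finset.HasAntidiagonal.antidiagonal (p + i) := by
    intro x hx
    simp only [Finset.mem_insert, Finset.mem_singleton] at hx
    rcases hx with rfl | rfl <;> simp [add_comm]
  rw [← Finset.sum_subset hsub, Finset.sum_pair hne]
  · simp
    ring
  · rintro ⟨a, b⟩ hab hx
    simp only [Finset.HasAntidiagonal.mem_antidiagonal, Finset.mem_insert, Finset.mem_singleton, Prod.mk.injEq,
      not_or] at hab hx
    rw [ZMod.natCast_eq_zero_iff]
    rcases lt_or_ge p a with ha | ha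
    · simp [Nat.choose_eq_zero_of_lt ha]
    rcases lt_or_ge p b with hb | hb
    · simp [Nat.choose_eq_zero_of_lt hb]
    rw [sq]
    exact mul_dvd_mul (hp.dvd_choose_self (by omega) (by omega))
      (hp.dvd_choose_self (by omega) (by omega))

lemma sum_centralBinom_prime {p : ℕ} (hp : p.Prime) (hodd : Odd p) :
    ∑ k ∈ Finset.range p, ((2 * k).choose k : ZMod (p ^ 2)) = (chiThree p : ZMod (p ^ 2)) := by
  have h := congrArg (Int.cast : ℤ → ZMod (p ^ 2)) (sum_centralBinom_eq p p le_rfl)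
  have hb := congrArg (Int.cast : ℤ → ZMod (p ^ 2)) (sum_choose_mul_chiThree p 0)
  obtain ⟨q, rfl⟩ : ∃ q, p = q + 1 := ⟨p - 1, by have := hp.pos; omega⟩
  rw [add_zero, hodd.neg_one_pow, chiThree_two_mul, Finset.sum_range_succ,
    Finset.sum_range_succ'] at hb
  push_cast at h hb
  rw [h, Finset.sum_range_succ, Finset.sum_congr rfl
    (g := fun j => 2 * (((q + 1).choose (j + 1) : ZMod ((q + 1) ^ 2)) *
      (chiThree (j + 1) : ZMod ((q + 1) ^ 2)))), ← Finset.mul_sum]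
  · rw [show q + 1 + q + 1 = 2 * (q + 1) by ring]
    have h0 : chiThree 0 = 0 := rfl
    simp only [add_zero, h0, Int.cast_zero, mul_zero, Nat.choose_self, Nat.cast_one, one_mul,
      neg_mul_neg] at hb ⊢
    linear_combination 2 * hb
  · intro j hj
    rw [Finset.mem_range] at hj
    rw [add_assoc (q + 1), cast_choose_two_mul_prime hp (by omega) (by omega), mul_assoc]

lemma double_sum_choose_sq_eq {p : ℕ} (hp : p.Prime) :
    ∑ n ∈ Finset.range p, ∑ m ∈ Finset.range p, ((n + m).choose m : ZMod (p ^ 2)) ^ 2 =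
      ∑ k ∈ Finset.range p, ((2 * k).choose k : ZMod (p ^ 2)) := by
  have h : ∀ n ∈ Finset.range p,
      ∑ m ∈ Finset.range p, ((n + m).choose m : ZMod (p ^ 2)) ^ 2 =
        ∑ m ∈ Finset.range (p - n), ((n + m).choose m : ZMod (p ^ 2)) ^ 2 := by
    intro n hn
    symm
    apply Finset.sum_subset
    · intro x hx
      simp only [Finset.mem_range] at *
      omega
    · intro m hm hm'
      simp only [Finset.mem_range] at *
      rw [← Nat.cast_pow, ZMod.natCast_eq_zero_iff]
      exact pow_dvd_pow_of_dvd (hp.dvd_choose hm (by omega) (by omega)) 2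
  rw [Finset.sum_congr rfl h,
    ← Finset.sum_range_diag_flip p (fun n m => ((n + m).choose m : ZMod (p ^ 2)) ^ 2)]
  refine Finset.sum_congr rfl fun k _ => ?_
  rw [← Nat.sum_range_choose_sq k]
  push_cast
  refine Finset.sum_congr rfl fun i hi => ?_
  have hik : i ≤ k := by simpa [Nat.lt_succ_iff] using hi
  rw [Nat.add_sub_cancel' hik, Nat.choose_symm hik]

theorem double_sum_choose_sq_mod_p_sq (p : ℕ) (hp : p.Prime) (hp5 : 5 ≤ p) :
    (p % 3 = 1 → (∑ n ∈ Finset.range p, ∑ m ∈ Finset.range p,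
      ((n + m).choose m : ZMod (p ^ 2)) ^ 2) = 1) ∧
    (p % 3 = 2 → (∑ n ∈ Finset.range p, ∑ m ∈ Finset.range p,
      ((n + m).choose m : ZMod (p ^ 2)) ^ 2) = -1) := by
  rw [double_sum_choose_sq_eq hp, sum_centralBinom_prime hp (hp.odd_of_ne_two (by omega))]
  constructor <;> intro h <;> simp [chiThree, h]
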